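/- In the semi-primitive cyclotomic setting, assume |T_0| = (q−1)/2 and |T_1| = (q+1)/2 and define E_1 = {(x,xy) : x ∈ D_0, y ∈ A_0} ∪ {(x,xy) : x ∈ D_1, y ∈ A_1}. Then E_1 is a set of type Q in F_{q²} × F_{q²}. -/

import Mathlib

noncomputable section

def zetaP (p : ℕ) : ℂ := Complex.exp (2 * Real.pi * Complex.I / p)

/-- The canonical additive character `ψ(x) = ζ_p^{Tr_{L/F_p}(x)}`. -/
def psiL (p : ℕ) (L : Type) [Field L] [Fintype L] [CharP L p] (x : L) : ℂ :=
  letI : Algebra (ZMod p) L := ZMod.algebra L p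
  zetaP p ^ (Algebra.trace (ZMod p) L x).val

/-- `ψ_{a,b}(E) = Σ_{(x,y)∈E} ψ(ax+by)`. -/
def psiSum (p : ℕ) (L : Type) [Field L] [Fintype L] [CharP L p]
    (a b : L) (E : Set (L × L)) : ℂ :=
  ∑ᶠ z ∈ E, psiL p L (a * z.1 + b * z.2)

/-- a subset of `F_{q²} × F_{q²}` of type Q. -/
def IsTypeQ (p q : ℕ) (L : Type) [Field L] [Fintype L] [CharP L p]
    (E : Set (L × L)) : Prop :=
  E.ncard = (q ^ 4 - 1) / 4 ∧
    ∀ a b : L, (a, b) ≠ ((0 : L), (0 : L)) →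
      psiSum p L a b E = ((q : ℂ) ^ 2 - 1) / 4 ∨
      psiSum p L a b E = (-3 * (q : ℂ) ^ 2 - 1) / 4

/-- the cyclotomic class `C_i^{(N,q²)} = ω^i⟨ω^N⟩`. -/
def cyc (L : Type) [Field L] (ω : L) (N i : ℕ) : Set L :=
  {x | ∃ k : ℕ, x = ω ^ i * (ω ^ N) ^ k}

/-- ω is a primitive element (generator of the multiplicative group). -/
def IsPrim (L : Type) [Field L] (ω : L) : Prop :=
  ∀ x : L, x ≠ 0 → ∃ n : ℕ, x = ω ^ n

/-!
Let `ψ` be an additive character of `K = F_q` and `f` a function on `L = F_{q²}` that is constant on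
punctured `K`-lines, vanishes at `0` and has sum zero. Averaging over `Kˣ` gives, for every function
`w` on `K`, every nonzero linear form `φ` and every generator `k` of `ker φ`,
`∑ y, w (φ y) f y = f k (q w(0) - ∑ c, w c)`.

Since `-1` times the sign function `χ` of `D_0` against `D_1` is its translate by `ω ^ m`, the sign
`χ` satisfies these conditions. Taking `f = χ` and `w = ψ` evaluates the Gauss sum of `χ` at `z` as
`q χ(k / z)` with `k` spanning the kernel of the trace. Splitting `E_1` into its fibres of constant
slope `y` thus turns `ψ_{a,b}(E_1)` into a sum over `y` of the indicators of `T_0` and `T_1` at the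
traces of `y` and `y ω ^ m`, weighted by `χ(k / (a + b y))`. This is the identity again, now with
`f y = χ(k / y)` and `w` a translated indicator. The result is
`2 ψ_{a,b}(E_1) = q² (1 - t² + t) - (q² + 1) / 2` with `t ∈ {0, 1, -1}`; the values `t = 0` and
`t = 1` coincide, so only two values remain.
-/

section LineConstant

variable {K V R : Type*} [Field K] [AddCommGroup V] [Module K V] [CommRing R]

/-- A function on a vector space that is constant on each punctured line through the origin and
vanishes at the origin, i.e. a function on the projective space of `V` extended by zero. -/
structure IsLineConstant (K : Type*) {V R : Type*} [Zero K] [Zero V] [SMul K V] [Zero R]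
    (f : V → R) : Prop where
  map_zero : f 0 = 0
  map_smul : ∀ {c : K}, c ≠ 0 → ∀ x, f (c • x) = f x

theorem exists_smul_eq_of_mem_ker (hV : Module.finrank K V = 2) {φ : V →ₗ[K] K} (hφ : φ ≠ 0)
    {k : V} (hk : φ k = 0) (hk0 : k ≠ 0) {y : V} (hy : φ y = 0) : ∃ c : K, c • k = y := by
  have : FiniteDimensional K V := .of_finrank_pos (by lia)
  have hker : Module.finrank K (LinearMap.ker φ) = 1 := by
    have := Module.Dual.finrank_ker_add_one_of_ne_zero hφ
    lia
  obtain ⟨c, hc⟩ := exists_smul_eq_of_finrank_eq_one hker (x := ⟨k, hk⟩)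
    (fun h => hk0 (congrArg Subtype.val h)) ⟨y, hy⟩
  exact ⟨c, congrArg Subtype.val hc⟩

theorem exists_ne_zero_mem_ker (hV : Module.finrank K V = 2) (φ : V →ₗ[K] K) :
    ∃ k, k ≠ 0 ∧ φ k = 0 := by
  have : FiniteDimensional K V := .of_finrank_pos (by lia)
  obtain ⟨k, hk, hk0⟩ := (LinearMap.ker φ).exists_mem_ne_zero_of_ne_bot
    (LinearMap.ker_ne_bot_of_finrank_lt (by rw [hV, Module.finrank_self]; lia))
  exact ⟨k, hk0, hk⟩

variable [Fintype K]

theorem IsLineConstant.sum_smul {f : V → R} (hf : IsLineConstant K f) (v : V) :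
    ∑ c : K, f (c • v) = (Fintype.card K - 1) * f v := by
  classical
  rw [← Finset.add_sum_erase _ _ (Finset.mem_univ 0), zero_smul, hf.map_zero, zero_add,
    Finset.sum_congr rfl fun c hc => hf.map_smul (Finset.ne_of_mem_erase hc) v,
    Finset.sum_const, Finset.card_erase_of_mem (Finset.mem_univ _), Finset.card_univ,
    nsmul_eq_mul, Nat.cast_pred Fintype.card_pos]

theorem sum_mul_right_eq_ite [DecidableEq K] (w : K → R) (a : K) :
    ∑ c, w (c * a) = if a = 0 then Fintype.card K * w 0 else ∑ c, w c := by
  split_ifs with ha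
  · simp [ha]
  · exact Equiv.sum_comp (Equiv.mulRight₀ a ha) w

theorem sum_ker [Fintype V] [DecidableEq K] (hV : Module.finrank K V = 2) {φ : V →ₗ[K] K}
    (hφ : φ ≠ 0) {k : V} (hk : φ k = 0) (hk0 : k ≠ 0) (f : V → R) :
    ∑ y with φ y = 0, f y = ∑ c : K, f (c • k) := by
  symm
  refine Finset.sum_bij (fun c _ => c • k) ?_ ?_ ?_ (fun _ _ => rfl)
  · simp [hk]
  · exact fun _ _ _ _ h => smul_left_injective K hk0 h
  · simpa using fun y hy => exists_smul_eq_of_mem_ker hV hφ hk hk0 hy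

theorem card_sub_one_ne_zero [CharZero R] : (Fintype.card K - 1 : R) ≠ 0 :=
  sub_ne_zero.mpr (mod_cast Fintype.one_lt_card.ne')

-- Averaging over the rescalings `y ↦ c • y` replaces `w` by its mean on `K`, except on `ker φ`.
theorem IsLineConstant.sum_comp_mul [Fintype V] [IsDomain R] [CharZero R]
    (hV : Module.finrank K V = 2) {φ : V →ₗ[K] K} (hφ : φ ≠ 0) {k : V} (hk : φ k = 0)
    (hk0 : k ≠ 0) {f : V → R} (hf : IsLineConstant K f) (hsum : ∑ y, f y = 0) (w : K → R) :
    ∑ y, w (φ y) * f y = f k * (Fintype.card K * w 0 - ∑ c, w c) := by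
  classical
  have hF : IsLineConstant K fun c : K => ∑ y, w (c * φ y) * f y := by
    refine ⟨by simp [← Finset.mul_sum, hsum], fun {c} hc d => ?_⟩
    refine Fintype.sum_equiv (MulAction.toPerm (Units.mk0 c hc)) _ _ fun y => ?_
    simp [Units.smul_def, hf.map_smul hc, mul_left_comm, mul_assoc]
  refine mul_left_cancel₀ (card_sub_one_ne_zero (K := K)) ?_
  calc (Fintype.card K - 1 : R) * ∑ y, w (φ y) * f y
    _ = ∑ c, ∑ y, w (c * φ y) * f y := by simpa using (hF.sum_smul 1).symm
    _ = ∑ y, (if φ y = 0 then Fintype.card K * w 0 else ∑ c, w c) * f y := by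
      simp only [Finset.sum_comm (s := Finset.univ (α := K)), ← Finset.sum_mul,
        sum_mul_right_eq_ite]
    _ = (Fintype.card K * w 0 - ∑ c, w c) * (∑ y with φ y = 0, f y) + (∑ c, w c) * ∑ y, f y := by
      rw [Finset.sum_filter, Finset.mul_sum, Finset.mul_sum, ← Finset.sum_add_distrib]
      refine Finset.sum_congr rfl fun y _ => ?_
      split_ifs <;> ring
    _ = (Fintype.card K - 1) * (f k * (Fintype.card K * w 0 - ∑ c, w c)) := by
      rw [sum_ker hV hφ hk hk0, hf.sum_smul, hsum]
      ring

theorem sum_indicator_one {α : Type*} [Fintype α] (T : Set α) :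
    ∑ c, T.indicator (1 : α → R) c = T.ncard := by
  classical
  simp [Set.indicator_apply, Set.ncard_eq_toFinset_card', ← Finset.sum_boole]

theorem IsLineConstant.sum_indicator_mul_sub [Fintype V] [IsDomain R] [CharZero R]
    (hV : Module.finrank K V = 2) {φ : V →ₗ[K] K} (hφ : φ ≠ 0) {k : V} (hk : φ k = 0)
    (hk0 : k ≠ 0) {f : V → R} (hf : IsLineConstant K f) (hsum : ∑ y, f y = 0) (T : Set K)
    (y₀ : V) :
    ∑ y, T.indicator 1 (φ y) * f (y - y₀) =
      f k * (Fintype.card K * T.indicator 1 (φ y₀) - T.ncard) := by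
  have hcard : ∑ c, T.indicator (1 : K → R) (c + φ y₀) = T.ncard :=
    (Equiv.sum_comp (Equiv.addRight (φ y₀)) (T.indicator 1)).trans (sum_indicator_one T)
  calc ∑ y, T.indicator 1 (φ y) * f (y - y₀)
    _ = ∑ y, T.indicator 1 (φ y + φ y₀) * f y :=
      Fintype.sum_equiv (Equiv.subRight y₀) _ _ fun y => by simp
    _ = f k * (Fintype.card K * T.indicator 1 (0 + φ y₀) - ∑ c, T.indicator 1 (c + φ y₀)) :=
      hf.sum_comp_mul hV hφ hk hk0 hsum fun c => T.indicator 1 (c + φ y₀)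
    _ = f k * (Fintype.card K * T.indicator 1 (φ y₀) - T.ncard) := by
      rw [zero_add, hcard]

end LineConstant

section SkewSet

variable {K L : Type*} [Field K] [Field L] [Algebra K L] {v : L} {D : Set L}

/-- A set `D` of nonzero elements of `L`, stable under multiplication by `Kˣ`, which multiplication
by `v` interchanges with its complement in `Lˣ`. The unions of cyclotomic classes `D_0` and `D_1`
are such sets, with `v = ω ^ m`. -/
structure IsSkewSet (K : Type*) {L : Type*} [Field K] [Field L] [Algebra K L] (v : L)
    (D : Set L) : Prop where
  ne_zero : v ≠ 0
  zero_notMem : 0 ∉ D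
  smul_mem : ∀ {c : K}, c ≠ 0 → ∀ {x}, x ∈ D → c • x ∈ D
  mul_mem_iff : ∀ {x}, x ≠ 0 → (v * x ∈ D ↔ x ∉ D)

open Classical in
/-- The function which is `1` on `D`, `-1` on the nonzero elements outside `D`, and `0` at `0`. -/
def skewSign (D : Set L) (x : L) : ℂ := if x ∈ D then 1 else if x = 0 then 0 else -1

namespace IsSkewSet

theorem smul_mem_iff (hD : IsSkewSet K v D) {c : K} (hc : c ≠ 0) {x : L} :
    c • x ∈ D ↔ x ∈ D :=
  ⟨fun h => by simpa [hc] using hD.smul_mem (inv_ne_zero hc) h, hD.smul_mem hc⟩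

theorem compl (hD : IsSkewSet K v D) : IsSkewSet K v ({0}ᶜ \ D) where
  ne_zero := hD.ne_zero
  zero_notMem := by simp
  smul_mem hc _ hx := by simpa [hc, hD.smul_mem_iff hc] using hx
  mul_mem_iff hx := by simp [hx, hD.ne_zero, hD.mul_mem_iff hx]

theorem mul_ne_smul (hD : IsSkewSet K v D) {x : L} (hx : x ≠ 0) (c : K) : v * x ≠ c • x := by
  intro h
  have hc : c ≠ 0 := by
    rintro rfl
    simp [hx, hD.ne_zero] at h
  have := hD.mul_mem_iff hx
  rw [h, hD.smul_mem_iff hc] at this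
  tauto

theorem skewSign_compl (hD : IsSkewSet K v D) (x : L) :
    skewSign ({0}ᶜ \ D) x = -skewSign D x := by
  have h0 := hD.zero_notMem
  by_cases hx : x = 0 <;> by_cases hxD : x ∈ D <;> simp_all [skewSign]

theorem isLineConstant_skewSign (hD : IsSkewSet K v D) : IsLineConstant K (skewSign D) where
  map_zero := by simp [skewSign, hD.zero_notMem]
  map_smul hc x := by
    classical
    simp [skewSign, hD.smul_mem_iff hc, hc]

theorem skewSign_mul (hD : IsSkewSet K v D) (x : L) :
    skewSign D (v * x) = -skewSign D x := by
  by_cases hx : x = 0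
  · simp [hx, skewSign, hD.zero_notMem]
  · by_cases hxD : x ∈ D <;> simp [skewSign, hD.mul_mem_iff hx, hx, hxD, hD.ne_zero]

end IsSkewSet

theorem skewSign_eq_one_or_eq_neg_one (D : Set L) {x : L} (hx : x ≠ 0) :
    skewSign D x = 1 ∨ skewSign D x = -1 := by
  by_cases hxD : x ∈ D <;> simp [skewSign, hx, hxD]

theorem sq_skewSign (D : Set L) {x : L} (hx : x ≠ 0) : skewSign D x ^ 2 = 1 := by
  obtain h | h := skewSign_eq_one_or_eq_neg_one D hx <;> simp [h]

theorem two_mul_indicator_one (D : Set L) [DecidableEq L] (h0 : 0 ∉ D) (x : L) :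
    2 * D.indicator 1 x = 1 - (if x = 0 then 1 else 0) + skewSign D x := by
  by_cases hx : x = 0
  · simp [hx, skewSign, h0]
  · by_cases hxD : x ∈ D <;> norm_num [skewSign, hx, hxD]

theorem IsLineConstant.comp_div {R : Type*} [Zero R] {f : L → R} (hf : IsLineConstant K f)
    (w : L) : IsLineConstant K fun y => f (w / y) where
  map_zero := by simp [hf.map_zero]
  map_smul {c} hc y := by
    rw [← hf.map_smul (inv_ne_zero hc) (w / y)]
    simp only [Algebra.smul_def, map_inv₀, div_eq_mul_inv, mul_inv, mul_left_comm]

theorem sum_eq_zero_of_map_mul_eq_neg [Fintype L] {R : Type*} [CommRing R] [IsDomain R]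
    [CharZero R] (hv : v ≠ 0) {f : L → R} (hf : ∀ x, f (v * x) = -f x) : ∑ x, f x = 0 := by
  have h : ∑ x, f x = -∑ x, f x := by
    rw [← Finset.sum_neg_distrib, ← Equiv.sum_comp (Equiv.mulLeft₀ v hv) f]
    exact Finset.sum_congr rfl fun x _ => hf x
  exact self_eq_neg.mp h

namespace IsSkewSet

theorem skewSign_div (hD : IsSkewSet K v D) (w y : L) :
    skewSign D (w / (v * y)) = -skewSign D (w / y) := by
  rw [← neg_eq_iff_eq_neg, ← hD.skewSign_mul, ← mul_div_assoc, mul_div_mul_left _ _ hD.ne_zero]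

theorem sum_skewSign [Fintype L] (hD : IsSkewSet K v D) : ∑ x, skewSign D x = 0 :=
  sum_eq_zero_of_map_mul_eq_neg hD.ne_zero hD.skewSign_mul

theorem sum_skewSign_div [Fintype L] (hD : IsSkewSet K v D) (w : L) :
    ∑ y, skewSign D (w / y) = 0 :=
  sum_eq_zero_of_map_mul_eq_neg hD.ne_zero (hD.skewSign_div w)

theorem two_mul_ncard_add_one [Fintype L] (hD : IsSkewSet K v D) :
    2 * D.ncard + 1 = Fintype.card L := by
  classical
  have h : 2 * (D.ncard : ℂ) = Fintype.card L - 1 := by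
    rw [← sum_indicator_one, Finset.mul_sum]
    simp only [two_mul_indicator_one D hD.zero_notMem, Finset.sum_add_distrib,
      Finset.sum_sub_distrib, hD.sum_skewSign]
    simp
  exact_mod_cast eq_sub_iff_add_eq.mp h

end IsSkewSet

end SkewSet

section Trace

variable {K L : Type*} [Field K] [Field L] [Algebra K L] [FiniteDimensional K L]
  [Algebra.IsSeparable K L]

theorem traceForm_surjective {z : L} (hz : z ≠ 0) :
    Function.Surjective (Algebra.traceForm K L z) := by
  intro c
  obtain ⟨x, rfl⟩ := Algebra.trace_surjective K L c
  exact ⟨x / z, by rw [Algebra.traceForm_apply, mul_div_cancel₀ _ hz]⟩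

theorem traceForm_ne_zero {z : L} (hz : z ≠ 0) : Algebra.traceForm K L z ≠ 0 := by
  obtain ⟨x, hx⟩ := traceForm_surjective (K := K) hz 1
  exact fun h => one_ne_zero (hx.symm.trans (by rw [h, LinearMap.zero_apply]))

theorem sum_addChar_trace_mul [Fintype L] [DecidableEq L] {θ : AddChar K ℂ} (hθ : θ ≠ 1) (z : L) :
    ∑ x, θ (Algebra.trace K L (z * x)) = if z = 0 then (Fintype.card L : ℂ) else 0 := by
  split_ifs with hz
  · simp [hz]
  · obtain ⟨c, hc⟩ := AddChar.ne_one_iff.mp hθ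
    obtain ⟨x, rfl⟩ := traceForm_surjective hz c
    exact AddChar.sum_eq_zero_of_ne_one
      (ψ := θ.compAddMonoidHom (Algebra.traceForm K L z).toAddMonoidHom)
      (AddChar.ne_one_iff.mpr ⟨x, hc⟩)

theorem IsSkewSet.bijective_trace_prod {v : L} {D : Set L} (hD : IsSkewSet K v D)
    (hL : Module.finrank K L = 2) :
    Function.Bijective fun y : L => (Algebra.trace K L y, Algebra.trace K L (y * v)) := by
  let Φ : L →ₗ[K] K × K :=
    (Algebra.trace K L).prod (Algebra.trace K L ∘ₗ LinearMap.mulRight K v)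
  have hinj : Function.Injective Φ := by
    refine (injective_iff_map_eq_zero Φ).mpr fun x hx => by_contra fun hx0 => ?_
    have hx := Prod.mk_eq_zero.mp hx
    obtain ⟨c, hc⟩ :=
      exists_smul_eq_of_mem_ker hL (Algebra.trace_ne_zero K L) hx.1 hx0 hx.2
    exact hD.mul_ne_smul hx0 c ((mul_comm v x).trans hc.symm)
  exact ⟨hinj, (LinearMap.injective_iff_surjective_of_finrank_eq_finrank (by simp [hL])).mp hinj⟩

theorem IsSkewSet.ncard_trace_mem_and {v : L} {D : Set L} (hD : IsSkewSet K v D)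
    (hL : Module.finrank K L = 2) (T₀ T₁ : Set K) :
    {y : L | Algebra.trace K L y ∈ T₀ ∧ Algebra.trace K L (y * v) ∈ T₁}.ncard =
      T₀.ncard * T₁.ncard := by
  have hbij := hD.bijective_trace_prod hL
  rw [← Set.ncard_prod, ← Set.ncard_preimage_of_injective_subset_range hbij.injective
    (by simp [hbij.surjective.range_eq])]
  rfl

theorem IsSkewSet.ncard_trace_mem_sdiff [Fintype K] {v : L} {D : Set L} (hD : IsSkewSet K v D)
    (hL : Module.finrank K L = 2) {T₀ T₁ : Set K} (hT : T₀.ncard + T₁.ncard = Fintype.card K) :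
    ({y : L | Algebra.trace K L y ∈ T₀} \ {y | Algebra.trace K L (y * v) ∈ T₁}).ncard =
      T₀.ncard ^ 2 := by
  have hcompl : T₁ᶜ.ncard = T₀.ncard := by
    have := Set.ncard_add_ncard_compl T₁
    rw [Nat.card_eq_fintype_card] at this
    lia
  rw [sq]
  nth_rw 2 [← hcompl]
  exact hD.ncard_trace_mem_and hL T₀ T₁ᶜ

theorem IsSkewSet.ncard_trace_mul_mem_sdiff [Fintype K] {v : L} {D : Set L} (hD : IsSkewSet K v D)
    (hL : Module.finrank K L = 2) {T₀ T₁ : Set K} (hT : T₀.ncard + T₁.ncard = Fintype.card K) :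
    ({y : L | Algebra.trace K L (y * v) ∈ T₁} \ {y | Algebra.trace K L y ∈ T₀}).ncard =
      T₁.ncard ^ 2 := by
  have hcompl : T₀ᶜ.ncard = T₁.ncard := by
    have := Set.ncard_add_ncard_compl T₀
    rw [Nat.card_eq_fintype_card] at this
    lia
  rw [sq]
  nth_rw 1 [← hcompl]
  rw [← hD.ncard_trace_mem_and hL]
  exact congrArg Set.ncard (Set.ext fun _ => and_comm)

end Trace

section SlopeSet

/-- The points `(x, x * y)` with abscissa `x ∈ D` and slope `y ∈ A`. -/
def slopeSet {L : Type*} [Mul L] (D A : Set L) : Set (L × L) :=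
  {w | ∃ x ∈ D, ∃ y ∈ A, w = (x, x * y)}

theorem slopeSet_eq_image {L : Type*} [Mul L] (D A : Set L) :
    slopeSet D A = (fun w : L × L => (w.1, w.1 * w.2)) '' D ×ˢ A := by
  ext w
  simp [slopeSet, eq_comm, and_assoc]

section MulZero

variable {L : Type*} [MulZeroClass L] [IsLeftCancelMulZero L] {D : Set L}

theorem injOn_prod_mk_mul (h0 : 0 ∉ D) (A : Set L) :
    Set.InjOn (fun w : L × L => (w.1, w.1 * w.2)) (D ×ˢ A) := by
  rintro ⟨x, y⟩ ⟨hx, -⟩ ⟨x', y'⟩ - h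
  obtain ⟨rfl, h⟩ := Prod.mk.inj h
  rw [Prod.mk.injEq]
  exact ⟨rfl, mul_left_cancel₀ (ne_of_mem_of_not_mem hx h0) h⟩

theorem ncard_slopeSet (h0 : 0 ∉ D) (A : Set L) :
    (slopeSet D A).ncard = D.ncard * A.ncard := by
  rw [slopeSet_eq_image, (injOn_prod_mk_mul h0 A).ncard_image, Set.ncard_prod]

theorem finsum_mem_slopeSet [Fintype L] {R : Type*} [CommSemiring R] (h0 : 0 ∉ D) (A : Set L)
    (f : L × L → R) :
    ∑ᶠ w ∈ slopeSet D A, f w =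
      ∑ y, A.indicator 1 y * ∑ x, D.indicator 1 x * f (x, x * y) := by
  rw [slopeSet_eq_image, finsum_mem_image (injOn_prod_mk_mul h0 A), finsum_mem_def,
    finsum_eq_sum_of_fintype, Fintype.sum_prod_type_right]
  simp only [Finset.mul_sum]
  refine Finset.sum_congr rfl fun y _ => Finset.sum_congr rfl fun x _ => ?_
  by_cases hx : x ∈ D <;> by_cases hy : y ∈ A <;> simp [hx, hy]

end MulZero

theorem disjoint_slopeSet {L : Type*} [Mul L] {D D' : Set L} (h : Disjoint D D') (A A' : Set L) :
    Disjoint (slopeSet D A) (slopeSet D' A') := by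
  rw [Set.disjoint_left]
  rintro _ ⟨x, hx, y, -, rfl⟩ ⟨x', hx', y', -, h'⟩
  exact Set.disjoint_left.mp h hx ((Prod.mk.inj h').1 ▸ hx')

end SlopeSet

section CharacterSums

variable {K L : Type*} [Field K] [Fintype K] [Field L] [Fintype L] [Algebra K L]
  {θ : AddChar K ℂ} {v : L} {D : Set L}

-- At `z = 0` the argument `k / z` is `0`, where `skewSign D` vanishes, as does the sum.
theorem IsSkewSet.sum_skewSign_mul_addChar (hD : IsSkewSet K v D)
    (hL : Module.finrank K L = 2) (hθ : θ ≠ 1) {k : L} (hk : Algebra.trace K L k = 0)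
    (hk0 : k ≠ 0) (z : L) :
    ∑ x, skewSign D x * θ (Algebra.trace K L (z * x)) =
      Fintype.card K * skewSign D (k / z) := by
  obtain rfl | hz := eq_or_ne z 0
  · simp [hD.sum_skewSign, hD.isLineConstant_skewSign.map_zero]
  · have hker : Algebra.traceForm K L z (k / z) = 0 := by
      rw [Algebra.traceForm_apply, mul_div_cancel₀ _ hz, hk]
    have := hD.isLineConstant_skewSign.sum_comp_mul hL (traceForm_ne_zero hz) hker
      (div_ne_zero hk0 hz) hD.sum_skewSign θ
    rw [AddChar.sum_eq_zero_of_ne_one hθ, AddChar.map_zero_eq_one, mul_one, sub_zero] at this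
    simpa [mul_comm, Algebra.traceForm_apply] using this

theorem IsSkewSet.two_mul_sum_indicator_mul_addChar [DecidableEq L] (hD : IsSkewSet K v D)
    (hL : Module.finrank K L = 2) (hθ : θ ≠ 1) {k : L} (hk : Algebra.trace K L k = 0)
    (hk0 : k ≠ 0) (z : L) :
    2 * ∑ x, D.indicator 1 x * θ (Algebra.trace K L (z * x)) =
      (if z = 0 then (Fintype.card L : ℂ) else 0) - 1 +
        Fintype.card K * skewSign D (k / z) := by
  rw [← sum_addChar_trace_mul hθ, ← hD.sum_skewSign_mul_addChar hL hθ hk hk0]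
  simp only [Finset.mul_sum, ← mul_assoc, two_mul_indicator_one D hD.zero_notMem, add_mul,
    sub_mul, Finset.sum_add_distrib, Finset.sum_sub_distrib]
  simp

theorem IsSkewSet.two_mul_finsum_slopeSet_union [DecidableEq L] (hD : IsSkewSet K v D)
    (hL : Module.finrank K L = 2) (hθ : θ ≠ 1) {k : L} (hk : Algebra.trace K L k = 0)
    (hk0 : k ≠ 0) (A₀ A₁ : Set L) (a b : L) :
    2 * ∑ᶠ w ∈ slopeSet D A₀ ∪ slopeSet ({0}ᶜ \ D) A₁,
        θ (Algebra.trace K L (a * w.1 + b * w.2)) =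
      ∑ y, (A₀.indicator 1 y + A₁.indicator 1 y) *
          ((if a + b * y = 0 then (Fintype.card L : ℂ) else 0) - 1) +
        Fintype.card K *
          ∑ y, (A₀.indicator 1 y - A₁.indicator 1 y) * skewSign D (k / (a + b * y)) := by
  have hlin : ∀ x y, a * x + b * (x * y) = (a + b * y) * x := by
    intro x y
    ring
  rw [finsum_mem_union (disjoint_slopeSet disjoint_sdiff_self_right _ _) (Set.toFinite _)
      (Set.toFinite _),
    finsum_mem_slopeSet hD.zero_notMem, finsum_mem_slopeSet hD.compl.zero_notMem]
  simp only [hlin]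
  rw [mul_add, Finset.mul_sum, Finset.mul_sum, Finset.mul_sum, ← Finset.sum_add_distrib,
    ← Finset.sum_add_distrib]
  refine Finset.sum_congr rfl fun y _ => ?_
  have hperiod := hD.two_mul_sum_indicator_mul_addChar hL hθ hk hk0 (a + b * y)
  have hperiod' := hD.compl.two_mul_sum_indicator_mul_addChar hL hθ hk hk0 (a + b * y)
  rw [hD.skewSign_compl] at hperiod'
  linear_combination A₀.indicator 1 y * hperiod + A₁.indicator 1 y * hperiod'

end CharacterSums

section TraceSlopeSet

variable {K L : Type*} [Field K] [Fintype K] [Field L] [Algebra K L] {v : L}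
  {D : Set L} {T₀ T₁ : Set K}

/-- The set `E_1` of the theorem, with an arbitrary skew set `D` in place of the union `D_0` of
cyclotomic classes and `{0}ᶜ \ D` in place of `D_1`; `v` stands for `ω ^ m`. -/
def traceSlopeSet (v : L) (D : Set L) (T₀ T₁ : Set K) : Set (L × L) :=
  slopeSet D ({y | Algebra.trace K L y ∈ T₀} \ {y | Algebra.trace K L (y * v) ∈ T₁}) ∪
    slopeSet ({0}ᶜ \ D) ({y | Algebra.trace K L (y * v) ∈ T₁} \ {y | Algebra.trace K L y ∈ T₀})

theorem indicator_sdiff_sub_indicator_sdiff {α R : Type*} [Ring R] (S T : Set α) (y : α) :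
    (S \ T).indicator (1 : α → R) y - (T \ S).indicator 1 y =
      S.indicator 1 y - T.indicator 1 y := by
  by_cases hS : y ∈ S <;> by_cases hT : y ∈ T <;> simp [hS, hT]

theorem indicator_sdiff_add_indicator_sdiff {α R : Type*} [CommRing R] (S T : Set α) (y : α) :
    (S \ T).indicator (1 : α → R) y + (T \ S).indicator 1 y =
      1 - (S.indicator 1 y + T.indicator 1 y - 1) ^ 2 := by
  by_cases hS : y ∈ S <;> by_cases hT : y ∈ T <;> simp [hS, hT]

namespace IsSkewSet

theorem sum_indicator_trace_sub_mul_skewSign [Fintype L] (hD : IsSkewSet K v D)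
    (hL : Module.finrank K L = 2) {k : L} (hk : Algebra.trace K L k = 0) (hk0 : k ≠ 0)
    (w y₀ : L) :
    ∑ y, (T₀.indicator 1 (Algebra.trace K L y) - T₁.indicator 1 (Algebra.trace K L (y * v))) *
        skewSign D (w / (y - y₀)) =
      skewSign D (w / k) *
        (Fintype.card K * (T₀.indicator 1 (Algebra.trace K L y₀) +
          T₁.indicator 1 (Algebra.trace K L (y₀ * v))) - (T₀.ncard + T₁.ncard)) := by
  have hline := hD.isLineConstant_skewSign.comp_div w
  have hsum := hD.sum_skewSign_div w
  have h₀ := hline.sum_indicator_mul_sub hL (Algebra.trace_ne_zero K L) hk hk0 hsum T₀ y₀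
  have hker : Algebra.traceForm K L v (k / v) = 0 := by
    rw [Algebra.traceForm_apply, mul_div_cancel₀ _ hD.ne_zero, hk]
  have h₁ := hline.sum_indicator_mul_sub hL (traceForm_ne_zero hD.ne_zero) hker
    (div_ne_zero hk0 hD.ne_zero) hsum T₁ y₀
  have hsign : skewSign D (w / (k / v)) = -skewSign D (w / k) := by
    rw [← neg_eq_iff_eq_neg, ← hD.skewSign_div, mul_div_cancel₀ _ hD.ne_zero]
  simp only [Algebra.traceForm_apply, mul_comm v, hsign] at h₁
  simp only [sub_mul, Finset.sum_sub_distrib]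
  linear_combination h₀ - h₁

end IsSkewSet

theorem sum_indicator_add_mul_ite_sub_one {α R : Type*} [Fintype α] [DecidableEq α] [CommRing R]
    (A B : Set α) (y₀ : α) (c : R) :
    ∑ y, (A.indicator 1 y + B.indicator 1 y) * ((if y = y₀ then c else 0) - 1) =
      c * (A.indicator 1 y₀ + B.indicator 1 y₀) - (A.ncard + B.ncard) := by
  simp [mul_sub, Finset.sum_add_distrib, sum_indicator_one, mul_comm c]

namespace IsSkewSet

theorem two_mul_finsum_traceSlopeSet_zero_mul [Finite L] (hD : IsSkewSet K v D)
    (hL : Module.finrank K L = 2) {θ : AddChar K ℂ} (hθ : θ ≠ 1)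
    (hT : T₀.ncard + T₁.ncard = Fintype.card K) {k : L} (hk : Algebra.trace K L k = 0)
    (hk0 : k ≠ 0) {a : L} (ha : a ≠ 0) :
    2 * ∑ᶠ w ∈ traceSlopeSet v D T₀ T₁, θ (Algebra.trace K L (a * w.1 + 0 * w.2)) =
      Fintype.card K * ((T₀.ncard ^ 2 - T₁.ncard ^ 2) * skewSign D (k / a)) -
        (T₀.ncard ^ 2 + T₁.ncard ^ 2) := by
  classical
  cases nonempty_fintype L
  rw [traceSlopeSet, hD.two_mul_finsum_slopeSet_union hL hθ hk hk0]
  simp only [zero_mul, add_zero, ha, if_false, ← Finset.sum_mul, Finset.sum_add_distrib,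
    Finset.sum_sub_distrib, sum_indicator_one, hD.ncard_trace_mem_sdiff hL hT,
    hD.ncard_trace_mul_mem_sdiff hL hT, Nat.cast_pow]
  ring

theorem two_mul_finsum_traceSlopeSet_neg_mul [Fintype L] (hD : IsSkewSet K v D)
    (hL : Module.finrank K L = 2) {θ : AddChar K ℂ} (hθ : θ ≠ 1)
    (hT : T₀.ncard + T₁.ncard = Fintype.card K) {b : L} (hb : b ≠ 0) (y₀ : L) {u : ℂ}
    (hu : u = T₀.indicator 1 (Algebra.trace K L y₀) +
      T₁.indicator 1 (Algebra.trace K L (y₀ * v)) - 1) :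
    2 * ∑ᶠ w ∈ traceSlopeSet v D T₀ T₁, θ (Algebra.trace K L (-(b * y₀) * w.1 + b * w.2)) =
      Fintype.card L * (1 - u ^ 2) - (T₀.ncard ^ 2 + T₁.ncard ^ 2) +
        Fintype.card K ^ 2 * (skewSign D b⁻¹ * u) := by
  classical
  obtain ⟨k, hk0, hk⟩ := exists_ne_zero_mem_ker hL (Algebra.trace K L)
  have hroot : ∀ y, -(b * y₀) + b * y = b * (y - y₀) := fun y => by ring
  have hzero : ∀ y, b * (y - y₀) = 0 ↔ y = y₀ := fun y => by simp [hb, sub_eq_zero]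
  have hsum := hD.sum_indicator_trace_sub_mul_skewSign (T₀ := T₀) (T₁ := T₁) hL hk hk0 (k / b) y₀
  rw [div_right_comm, div_self hk0, one_div, ← Nat.cast_add, hT] at hsum
  rw [traceSlopeSet, hD.two_mul_finsum_slopeSet_union hL hθ hk hk0]
  simp only [hroot, hzero, ← div_div, indicator_sdiff_sub_indicator_sdiff]
  rw [sum_indicator_add_mul_ite_sub_one, hD.ncard_trace_mem_sdiff hL hT,
    hD.ncard_trace_mul_mem_sdiff hL hT, indicator_sdiff_add_indicator_sdiff]
  simp only [Set.indicator_apply, Set.mem_ofPred_eq, Pi.one_apply] at hsum hu ⊢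
  rw [hsum, hu]
  push_cast
  ring

theorem exists_two_mul_finsum_traceSlopeSet_eq [Finite L] (hD : IsSkewSet K v D)
    (hL : Module.finrank K L = 2) {θ : AddChar K ℂ} (hθ : θ ≠ 1)
    (hT : T₀.ncard + T₁.ncard = Fintype.card K) (hT' : T₁.ncard = T₀.ncard + 1) {a b : L}
    (hab : (a, b) ≠ 0) :
    ∃ t : ℂ, (t = 0 ∨ t = 1 ∨ t = -1) ∧
      2 * ∑ᶠ w ∈ traceSlopeSet v D T₀ T₁, θ (Algebra.trace K L (a * w.1 + b * w.2)) =
        Fintype.card K ^ 2 * (1 - t ^ 2 + t) - (Fintype.card K ^ 2 + 1) / 2 := by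
  classical
  cases nonempty_fintype L
  have hq : (Fintype.card K : ℂ) = 2 * T₀.ncard + 1 := by
    rw [← hT, hT']
    push_cast
    ring
  obtain rfl | hb := eq_or_ne b 0
  · obtain ⟨k, hk0, hk⟩ := exists_ne_zero_mem_ker hL (Algebra.trace K L)
    have ha : a ≠ 0 := by simpa using hab
    refine ⟨-skewSign D (k / a), ?_, ?_⟩
    · obtain h | h := skewSign_eq_one_or_eq_neg_one D (div_ne_zero hk0 ha) <;> simp [h]
    · rw [hD.two_mul_finsum_traceSlopeSet_zero_mul hL hθ hT hk hk0 ha, hT', hq]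
      push_cast
      linear_combination (2 * (T₀.ncard : ℂ) + 1) ^ 2 * sq_skewSign D (div_ne_zero hk0 ha)
  · obtain ⟨y₀, rfl⟩ : ∃ y₀, a = -(b * y₀) := ⟨-(a / b), by field_simp⟩
    obtain ⟨u, hu⟩ : ∃ u : ℂ, u = T₀.indicator 1 (Algebra.trace K L y₀) +
      T₁.indicator 1 (Algebra.trace K L (y₀ * v)) - 1 := ⟨_, rfl⟩
    have hcardL : (Fintype.card L : ℂ) = Fintype.card K ^ 2 := by
      rw [Module.card_eq_pow_finrank (K := K) (V := L), hL, Nat.cast_pow]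
    refine ⟨skewSign D b⁻¹ * u, ?_, ?_⟩
    · have hu' : u = 0 ∨ u = 1 ∨ u = -1 := by
        rw [hu]
        by_cases h₀ : Algebra.trace K L y₀ ∈ T₀ <;>
          by_cases h₁ : Algebra.trace K L (y₀ * v) ∈ T₁ <;> simp [h₀, h₁]
      obtain h | h := skewSign_eq_one_or_eq_neg_one D (inv_ne_zero hb) <;>
        obtain rfl | rfl | rfl := hu' <;> simp [h]
    · rw [hD.two_mul_finsum_traceSlopeSet_neg_mul hL hθ hT hb y₀ hu, hT', hcardL, hq]
      push_cast
      linear_combination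
        (2 * (T₀.ncard : ℂ) + 1) ^ 2 * u ^ 2 * sq_skewSign D (inv_ne_zero hb)

theorem finsum_traceSlopeSet_eq_or [Finite L] (hD : IsSkewSet K v D)
    (hL : Module.finrank K L = 2) {θ : AddChar K ℂ} (hθ : θ ≠ 1)
    (hT : T₀.ncard + T₁.ncard = Fintype.card K) (hT' : T₁.ncard = T₀.ncard + 1) {a b : L}
    (hab : (a, b) ≠ 0) :
    ∑ᶠ w ∈ traceSlopeSet v D T₀ T₁, θ (Algebra.trace K L (a * w.1 + b * w.2)) =
        ((Fintype.card K : ℂ) ^ 2 - 1) / 4 ∨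
      ∑ᶠ w ∈ traceSlopeSet v D T₀ T₁, θ (Algebra.trace K L (a * w.1 + b * w.2)) =
        (-3 * (Fintype.card K : ℂ) ^ 2 - 1) / 4 := by
  obtain ⟨t, rfl | rfl | rfl, h⟩ := hD.exists_two_mul_finsum_traceSlopeSet_eq hL hθ hT hT' hab
  · exact .inl (by linear_combination h / 2)
  · exact .inl (by linear_combination h / 2)
  · exact .inr (by linear_combination h / 2)

theorem four_mul_ncard_traceSlopeSet_add_one [Finite L] (hD : IsSkewSet K v D)
    (hL : Module.finrank K L = 2) (hT : T₀.ncard + T₁.ncard = Fintype.card K)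
    (hT' : T₁.ncard = T₀.ncard + 1) :
    4 * (traceSlopeSet v D T₀ T₁).ncard + 1 = Fintype.card K ^ 4 := by
  cases nonempty_fintype L
  have hcard : (traceSlopeSet v D T₀ T₁).ncard =
      D.ncard * T₀.ncard ^ 2 + ({0}ᶜ \ D).ncard * T₁.ncard ^ 2 := by
    rw [traceSlopeSet, Set.ncard_union_eq (disjoint_slopeSet disjoint_sdiff_self_right _ _),
      ncard_slopeSet hD.zero_notMem, ncard_slopeSet hD.compl.zero_notMem,
      hD.ncard_trace_mem_sdiff hL hT, hD.ncard_trace_mul_mem_sdiff hL hT]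
  have h₀ := hD.two_mul_ncard_add_one
  have h₁ := hD.compl.two_mul_ncard_add_one
  rw [Module.card_eq_pow_finrank (K := K) (V := L), hL, ← hT, hT'] at h₀ h₁
  rw [hcard, ← hT, hT']
  linear_combination 2 * T₀.ncard ^ 2 * h₀ + 2 * (T₀.ncard + 1) ^ 2 * h₁

end IsSkewSet

end TraceSlopeSet

section Cyclotomy

variable {L : Type} [Field L] {ω : L}

theorem IsPrim.ne_zero [Nontrivial Lˣ] (hω : IsPrim L ω) : ω ≠ 0 := by
  rintro rfl
  obtain ⟨x, hx⟩ := exists_ne (1 : Lˣ)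
  obtain ⟨n, hn⟩ := hω x x.ne_zero
  obtain rfl | h := eq_or_ne n 0
  · exact hx (Units.ext (by simpa using hn))
  · exact x.ne_zero (by rw [hn, zero_pow h])

theorem IsPrim.orderOf_eq [Fintype L] [Nontrivial Lˣ] (hω : IsPrim L ω) :
    orderOf ω = Fintype.card L - 1 := by
  classical
  have hgen : ∀ x, x ∈ Subgroup.zpowers (Units.mk0 ω hω.ne_zero) := fun x => by
    obtain ⟨n, hn⟩ := hω x x.ne_zero
    exact ⟨n, Units.ext (by simp [hn])⟩
  rw [← Fintype.card_units, ← Nat.card_eq_fintype_card,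
    ← orderOf_eq_card_of_forall_mem_zpowers hgen, ← orderOf_units, Units.val_mk0]

theorem IsPrim.add_one_dvd_orderOf [Fintype L] [Nontrivial Lˣ] (hω : IsPrim L ω) {q : ℕ}
    (hL : Fintype.card L = q ^ 2) : q + 1 ∣ orderOf ω := by
  rw [hω.orderOf_eq, hL, ← one_pow 2, Nat.sq_sub_sq]
  exact Nat.dvd_mul_right ..

theorem IsPrim.isOfFinOrder [Finite L] [Nontrivial Lˣ] (hω : IsPrim L ω) : IsOfFinOrder ω :=
  Units.isOfFinOrder_val.mpr (isOfFinOrder_of_finite (Units.mk0 ω hω.ne_zero))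

theorem pow_mem_cyc_iff {N : ℕ} (hω : IsOfFinOrder ω) (hN : N ∣ orderOf ω) {n i : ℕ} :
    ω ^ n ∈ cyc L ω N i ↔ n ≡ i [MOD N] := by
  simp only [cyc, Set.mem_ofPred_eq, ← pow_mul, ← pow_add, hω.pow_eq_pow_iff_modEq]
  constructor
  · rintro ⟨k, hk⟩
    simpa [Nat.ModEq] using hk.of_dvd hN
  · intro h
    have hle : i ≤ n + orderOf ω * i :=
      (Nat.le_mul_of_pos_left i hω.orderOf_pos).trans (Nat.le_add_left ..)
    have hmod : i ≡ n + orderOf ω * i [MOD N] :=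
      h.symm.trans (Nat.modEq_iff_dvd' (Nat.le_add_right ..) |>.mpr (by simpa using hN.mul_right i))
    obtain ⟨k, hk⟩ := (Nat.modEq_iff_dvd' hle).mp hmod
    refine ⟨k, ?_⟩
    rw [← hk, Nat.add_sub_cancel' hle]
    simp [Nat.ModEq]

theorem zero_notMem_cyc (hω : ω ≠ 0) (N i : ℕ) : 0 ∉ cyc L ω N i := by
  rintro ⟨k, hk⟩
  exact mul_ne_zero (pow_ne_zero i hω) (pow_ne_zero k (pow_ne_zero N hω)) hk.symm

theorem pow_mem_iUnion_cyc_iff {N : ℕ} (hω : IsOfFinOrder ω) (hN : N ∣ orderOf ω)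
    {S : Finset ℕ} (hS : ∀ i ∈ S, i < N) {n : ℕ} :
    ω ^ n ∈ ⋃ i ∈ S, cyc L ω N i ↔ n % N ∈ S := by
  simp only [Set.mem_iUnion, pow_mem_cyc_iff hω hN, exists_prop]
  constructor
  · rintro ⟨i, hi, h⟩
    rwa [h, Nat.mod_eq_of_lt (hS i hi)]
  · exact fun h => ⟨_, h, (Nat.mod_modEq n N).symm⟩

theorem IsPrim.exists_algebraMap_eq_pow {K : Type*} [Field K] [Fintype K] [Fintype L]
    [Algebra K L] [Nontrivial Lˣ] (hω : IsPrim L ω)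
    (hL : Fintype.card L = Fintype.card K ^ 2) {N : ℕ} (hN : N ∣ Fintype.card K + 1) {c : K}
    (hc : c ≠ 0) : ∃ d, algebraMap K L c = (ω ^ N) ^ d := by
  obtain ⟨e, he⟩ := hω (algebraMap K L c) (by simpa using hc)
  have hpow : ω ^ (e * (Fintype.card K - 1)) = 1 := by
    rw [pow_mul, ← he, ← map_pow, FiniteField.pow_card_sub_one_eq_one c hc, map_one]
  have hdvd : (Fintype.card K + 1) * (Fintype.card K - 1) ∣ e * (Fintype.card K - 1) := by
    have h := orderOf_dvd_of_pow_eq_one hpow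
    rwa [hω.orderOf_eq, hL, ← one_pow 2, Nat.sq_sub_sq] at h
  obtain ⟨d, rfl⟩ := hN.trans
    (Nat.dvd_of_mul_dvd_mul_right (Nat.sub_pos_of_lt Fintype.one_lt_card) hdvd)
  exact ⟨d, by rw [he, pow_mul]⟩

theorem add_mod_mem_iff_mod_notMem {m : ℕ} (hm : 0 < m) {S : Finset ℕ}
    (hS : ∀ k ∈ S, k < 2 * m) (hcard : S.card = m)
    (hdisj : ∀ k ∈ S, (k + m) % (2 * m) ∉ S) (n : ℕ) :
    (n + m) % (2 * m) ∈ S ↔ n % (2 * m) ∉ S := by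
  have hshift : ∀ k ∈ S, ((k + m) % (2 * m) + m) % (2 * m) = k := fun k hk => by
    rw [Nat.mod_add_mod, add_assoc, ← two_mul, Nat.add_mod_right, Nat.mod_eq_of_lt (hS k hk)]
  have himage : S.image (fun k => (k + m) % (2 * m)) = Finset.range (2 * m) \ S := by
    refine Finset.eq_of_subset_of_card_le (fun j hj => ?_) ?_
    · obtain ⟨k, hk, rfl⟩ := Finset.mem_image.mp hj
      exact Finset.mem_sdiff.mpr ⟨Finset.mem_range.mpr (Nat.mod_lt _ (by lia)), hdisj k hk⟩
    · rw [Finset.card_image_of_injOn (Set.LeftInvOn.injOn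
          (f₁' := fun k => (k + m) % (2 * m)) hshift),
        Finset.card_sdiff_of_subset fun k hk => Finset.mem_range.mpr (hS k hk), Finset.card_range]
      lia
  constructor
  · intro h h'
    exact hdisj _ h' (by rwa [Nat.mod_add_mod])
  · intro h
    have : n % (2 * m) ∈ Finset.range (2 * m) \ S :=
      Finset.mem_sdiff.mpr ⟨Finset.mem_range.mpr (Nat.mod_lt _ (by lia)), h⟩
    obtain ⟨k, hk, hkn⟩ := Finset.mem_image.mp (himage ▸ this)
    rwa [← Nat.mod_add_mod, ← hkn, hshift k hk]

section HalfSystem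

variable {m : ℕ} (hm : 0 < m) {S : Finset ℕ} (hS : ∀ k ∈ S, k < 2 * m) (hcard : S.card = m)
  (hdisj : ∀ k ∈ S, (k + m) % (2 * m) ∉ S)
include hm hS hcard hdisj

theorem iUnion_cyc_add_eq_compl_sdiff [Finite L] [Nontrivial Lˣ] (hω : IsPrim L ω)
    (hN : 2 * m ∣ orderOf ω) :
    ⋃ i ∈ S, cyc L ω (2 * m) (i + m) = {0}ᶜ \ ⋃ i ∈ S, cyc L ω (2 * m) i := by
  ext x
  obtain rfl | hx := eq_or_ne x 0
  · simp [zero_notMem_cyc hω.ne_zero]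
  obtain ⟨n, rfl⟩ := hω x hx
  have hadd : ∀ i, n ≡ i + m [MOD 2 * m] ↔ n + m ≡ i [MOD 2 * m] := fun i => by
    rw [← (Nat.ModEq.refl m).add_iff_right, add_assoc i, ← two_mul, Nat.modEq_add_modulus_iff]
  rw [Set.mem_sdiff, pow_mem_iUnion_cyc_iff hω.isOfFinOrder hN hS,
    ← add_mod_mem_iff_mod_notMem hm hS hcard hdisj,
    ← pow_mem_iUnion_cyc_iff hω.isOfFinOrder hN hS]
  simp [pow_mem_cyc_iff hω.isOfFinOrder hN, hadd, hω.ne_zero]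

theorem isSkewSet_iUnion_cyc {K : Type*} [Field K] [Fintype K] [Fintype L] [Algebra K L]
    [Nontrivial Lˣ] (hω : IsPrim L ω) (hL : Fintype.card L = Fintype.card K ^ 2)
    (hN : 2 * m ∣ Fintype.card K + 1) :
    IsSkewSet K (ω ^ m) (⋃ i ∈ S, cyc L ω (2 * m) i) where
  ne_zero := pow_ne_zero m hω.ne_zero
  zero_notMem := by simp [zero_notMem_cyc hω.ne_zero]
  smul_mem {c} hc x hx := by
    obtain ⟨d, hd⟩ := hω.exists_algebraMap_eq_pow hL hN hc
    simp only [Set.mem_iUnion] at hx ⊢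
    obtain ⟨i, hi, k, rfl⟩ := hx
    exact ⟨i, hi, k + d, by rw [Algebra.smul_def, hd, mul_left_comm, pow_add, mul_comm (_ ^ d)]⟩
  mul_mem_iff {x} hx := by
    obtain ⟨n, rfl⟩ := hω x hx
    have hN' : 2 * m ∣ orderOf ω := hN.trans (hω.add_one_dvd_orderOf hL)
    rw [← pow_add, add_comm, pow_mem_iUnion_cyc_iff hω.isOfFinOrder hN' hS,
      pow_mem_iUnion_cyc_iff hω.isOfFinOrder hN' hS, add_mod_mem_iff_mod_notMem hm hS hcard hdisj]

end HalfSystem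

end Cyclotomy

section CanonicalCharacter

/-- The canonical additive character `psiL` of a finite field, as a bundled character. -/
def psiChar (p : ℕ) (F : Type) [Field F] [Fintype F] [CharP F p] : AddChar F ℂ where
  toFun := psiL p F
  map_zero_eq_one' := by simp [psiL]
  map_add_eq_mul' := by
    have : NeZero p := ⟨CharP.char_ne_zero_of_finite F p⟩
    let χ := AddChar.zmodChar p (Complex.isPrimitiveRoot_exp p (NeZero.ne p)).pow_eq_one
    let : Algebra (ZMod p) F := ZMod.algebra F p
    intro x y
    have h := χ.map_add_eq_mul (Algebra.trace (ZMod p) F x) (Algebra.trace (ZMod p) F y)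
    rwa [← map_add] at h

theorem psiChar_ne_one (p : ℕ) (F : Type) [Field F] [Fintype F] [CharP F p] :
    psiChar p F ≠ 1 := by
  have : Fact p.Prime := ⟨CharP.char_is_prime F p⟩
  let : Algebra (ZMod p) F := ZMod.algebra F p
  obtain ⟨x, hx⟩ := Algebra.trace_surjective (ZMod p) F 1
  refine AddChar.ne_one_iff.mpr ⟨x, ?_⟩
  change zetaP p ^ (Algebra.trace (ZMod p) F x).val ≠ 1
  rw [hx, ZMod.val_one, pow_one]
  exact (Complex.isPrimitiveRoot_exp p (NeZero.ne p)).ne_one (Nat.Prime.one_lt Fact.out)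

theorem psiChar_trace (p : ℕ) (K : Type) {L : Type} [Field K] [Fintype K] [Field L] [Fintype L]
    [Algebra K L] [CharP K p] [CharP L p] (x : L) :
    psiChar p K (Algebra.trace K L x) = psiL p L x := by
  have : Fact p.Prime := ⟨CharP.char_is_prime K p⟩
  let : Algebra (ZMod p) K := ZMod.algebra K p
  let : Algebra (ZMod p) L := ZMod.algebra L p
  have : IsScalarTower (ZMod p) K L := .of_algebraMap_eq' (Subsingleton.elim _ _)
  change zetaP p ^ (Algebra.trace (ZMod p) K (Algebra.trace K L x)).val =
    zetaP p ^ (Algebra.trace (ZMod p) L x).val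
  rw [Algebra.trace_trace]

end CanonicalCharacter

theorem finrank_eq_two_of_card_eq_sq {K L : Type*} [Field K] [Fintype K] [AddCommGroup L]
    [Fintype L] [Module K L] (hL : Fintype.card L = Fintype.card K ^ 2) :
    Module.finrank K L = 2 :=
  Nat.pow_right_injective Fintype.one_lt_card (Module.card_eq_pow_finrank.symm.trans hL)

theorem nontrivial_units_of_card_eq_sq {L : Type*} [Field L] [Fintype L] {q : ℕ}
    (hL : Fintype.card L = q ^ 2) : Nontrivial Lˣ := by
  classical
  have hq : 1 < q := (Nat.one_lt_pow_iff two_ne_zero).mp (hL ▸ Fintype.one_lt_card)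
  have hsq : 2 ^ 2 ≤ q ^ 2 := Nat.pow_le_pow_left hq 2
  rw [← Fintype.one_lt_card_iff_nontrivial, Fintype.card_units, hL]
  lia

theorem semiprimitive_E1_typeQ_general {p : ℕ} {K L : Type} [Field K] [Fintype K] [Field L]
    [Fintype L] [Algebra K L] [CharP L p] (hL : Module.finrank K L = 2) {v : L} {D : Set L}
    (hD : IsSkewSet K v D) {T₀ T₁ : Set K} (hT : T₀.ncard + T₁.ncard = Fintype.card K)
    (hT' : T₁.ncard = T₀.ncard + 1) :
    IsTypeQ p (Fintype.card K) L (traceSlopeSet v D T₀ T₁) := by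
  have : CharP K p := (algebraMap K L).charP (algebraMap K L).injective p
  refine ⟨?_, fun a b hab => ?_⟩
  · rw [← hD.four_mul_ncard_traceSlopeSet_add_one hL hT hT', Nat.add_sub_cancel,
      Nat.mul_div_cancel_left _ four_pos]
  · simp only [psiSum, ← psiChar_trace p K]
    exact hD.finsum_traceSlopeSet_eq_or hL (psiChar_ne_one p K) hT hT' hab

/-- Theorem 3.2(2): if `|T₀| = (q−1)/2` and `|T₁| = (q+1)/2` then `E₁` is of type Q. -/
theorem semiprimitive_E1_typeQ
    (p s q m l t : ℕ) (hp : p.Prime) (hpodd : p ≠ 2) (hs : 0 < s) (hq : q = p ^ s)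
    (hm : 0 < m) (hdvd : 2 * m ∣ q + 1)
    (hl : 0 < l) (hldvd : 2 * m ∣ p ^ l + 1)
    (hlmin : ∀ l', 0 < l' → 2 * m ∣ p ^ l' + 1 → l ≤ l')
    (ht : s = l * t)
    (K L : Type) [Field K] [Fintype K] [Field L] [Fintype L] [Algebra K L] [CharP L p]
    (hK : Fintype.card K = q) (hL : Fintype.card L = q ^ 2)
    (ω : L) (hω : IsPrim L ω)
    (Kst : Finset ℕ) (hKsub : ∀ k ∈ Kst, k < 2 * m) (hKcard : Kst.card = m)
    (hKdisj : ∀ k ∈ Kst, (k + m) % (2 * m) ∉ Kst)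
    (D₀ D₁ : Set L)
    (hD₀ : D₀ = ⋃ i ∈ Kst, cyc L ω (2 * m) i)
    (hD₁ : D₁ = ⋃ i ∈ Kst, cyc L ω (2 * m) (i + m))
    (T₀ T₁ : Set K)
    (S₀ S₁ : Set L)
    (hS₀ : S₀ = {x : L | Algebra.trace K L x ∈ T₀})
    (hS₁ : S₁ = {x : L | Algebra.trace K L (x * ω ^ m) ∈ T₁})
    (ε : ℕ) (hε : ε = if Even ((p ^ l + 1) / (2 * m)) ∧ Odd t then 1 else 0)
    (Dε : Set L) (hDε : Dε = if ε = 0 then D₀ else D₁)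
    (A₀ A₁ : Set L) (hA₀ : A₀ = S₀ \ S₁) (hA₁ : A₁ = S₁ \ S₀)
    (hT₀ : T₀.ncard = (q - 1) / 2) (hT₁ : T₁.ncard = (q + 1) / 2)
    (E₁ : Set (L × L))
    (hE₁ : E₁ = {w | ∃ x ∈ D₀, ∃ y ∈ A₀, w = (x, x * y)} ∪
      {w | ∃ x ∈ D₁, ∃ y ∈ A₁, w = (x, x * y)})
    : IsTypeQ p q L E₁ := by
  subst hK hD₀ hD₁ hS₀ hS₁ hA₀ hA₁
  have : Nontrivial Lˣ := nontrivial_units_of_card_eq_sq hL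
  have hD := isSkewSet_iUnion_cyc hm hKsub hKcard hKdisj hω hL hdvd
  have hodd : 2 ∣ Fintype.card K + 1 := (Nat.dvd_mul_right 2 m).trans hdvd
  rw [hE₁, iUnion_cyc_add_eq_compl_sdiff hm hKsub hKcard hKdisj hω
    (hdvd.trans (hω.add_one_dvd_orderOf hL))]
  exact semiprimitive_E1_typeQ_general (finrank_eq_two_of_card_eq_sq hL) hD (by lia) (by lia)

end
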